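/- Let j, k ∈ {0,1} and let a, d, e, f be integers, set b := ad − 1, and let G be the group with presentation on generators α₁, β₁, α₂, β₂, m and relations α₁⁻¹mα₁ = m⁻¹, α₂⁻¹mα₂ = m⁻¹, β₁m = mβ₁, β₂m = mβ₂, α₁β₁α₁⁻¹β₁⁻¹ = m^j, α₂β₂α₂⁻¹β₂⁻¹ = m^k, α₁² = α₂^{2a}β₂m^e, β₁ = α₂^{2b}β₂^{d}m^f. Then the following relations hold in G: α₁·α₂² = α₂²·α₁·m^{j+2(f−de)} and α₂·α₁² = α₁²·α₂·m^{2e−k}. -/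

import Mathlib

/-- Generators `α₁`, `β₁`, `α₂`, `β₂`, `m` of the glued group `G`. -/
inductive GlueGen : Type
  | a1 : GlueGen  -- α₁
  | b1 : GlueGen  -- β₁
  | a2 : GlueGen  -- α₂
  | b2 : GlueGen  -- β₂
  | m : GlueGen   -- m

open FreeGroup in
/-- The relators of the presentation (c-odd) of the paper, with `b = ad − 1`:
`α₁⁻¹mα₁ = m⁻¹`, `α₂⁻¹mα₂ = m⁻¹`, `β₁m = mβ₁`, `β₂m = mβ₂`, `α₁β₁α₁⁻¹β₁⁻¹ = m^j`,
`α₂β₂α₂⁻¹β₂⁻¹ = m^k`, `α₁² = α₂^{2a}β₂m^e`, `β₁ = α₂^{2b}β₂^{d}m^f`. -/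
def cOddRels (j k a d e f : ℤ) : Set (FreeGroup GlueGen) :=
  { (of GlueGen.a1)⁻¹ * of GlueGen.m * of GlueGen.a1 * of GlueGen.m,
    (of GlueGen.a2)⁻¹ * of GlueGen.m * of GlueGen.a2 * of GlueGen.m,
    of GlueGen.b1 * of GlueGen.m * (of GlueGen.b1)⁻¹ * (of GlueGen.m)⁻¹,
    of GlueGen.b2 * of GlueGen.m * (of GlueGen.b2)⁻¹ * (of GlueGen.m)⁻¹,
    of GlueGen.a1 * of GlueGen.b1 * (of GlueGen.a1)⁻¹ * (of GlueGen.b1)⁻¹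
      * (of GlueGen.m) ^ (-j),
    of GlueGen.a2 * of GlueGen.b2 * (of GlueGen.a2)⁻¹ * (of GlueGen.b2)⁻¹
      * (of GlueGen.m) ^ (-k),
    (of GlueGen.a1) ^ 2
      * ((of GlueGen.a2) ^ (2 * a) * of GlueGen.b2 * (of GlueGen.m) ^ e)⁻¹,
    of GlueGen.b1
      * ((of GlueGen.a2) ^ (2 * (a * d - 1)) * (of GlueGen.b2) ^ d
          * (of GlueGen.m) ^ f)⁻¹ }

section InvertedElement

variable {G : Type*} [Group G] {m a b : G}

theorem SemiconjBy.zpow_neg_of_inv (h : SemiconjBy a m m⁻¹) (n : ℤ) :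
    SemiconjBy a (m ^ n) (m ^ (-n)) := by
  simpa using h.zpow_right n

/-- If conjugation by `a` inverts `m`, then `a ^ 2` commutes with `m`. -/
theorem SemiconjBy.sq_commute_of_inv (h : SemiconjBy a m m⁻¹) : Commute (a ^ 2) m := by
  have h' := h.inv_right.mul_left h
  rwa [inv_inv, ← sq] at h'

/-- If conjugation by `a` inverts `m` and multiplies `b` by a power of `m`, then `a ^ 2` commutes
with `b`. -/
theorem SemiconjBy.sq_commute_of_zpow_mul (h : SemiconjBy a m m⁻¹) {k : ℤ}
    (hb : SemiconjBy a b (m ^ k * b)) : Commute (a ^ 2) b := by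
  have h' := ((h.zpow_neg_of_inv k).mul_right hb).mul_left hb
  rwa [← mul_assoc, ← zpow_add, neg_add_cancel, zpow_zero, one_mul, ← sq] at h'

/-- If conjugation by `a` multiplies `x` by `m ^ (-n)` and inverts `m`, then `x` and `a` commute
up to `m ^ n`. -/
theorem SemiconjBy.mul_eq_mul_mul_zpow (h : SemiconjBy a m m⁻¹) {x : G} {n : ℤ}
    (hx : SemiconjBy a x (x * m ^ (-n))) : a * x = x * a * m ^ n := by
  rw [hx.eq, mul_assoc, mul_assoc, (h.zpow_neg_of_inv n).eq]

end InvertedElement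

/-- The relation `α₂α₁² = α₁²α₂m^{2e−k}`. -/
theorem a2_mul_a1_sq_of_gluing {G : Type*} [Group G] {a1 a2 b2 m : G} {k a e : ℤ}
    (h2 : SemiconjBy a2 m m⁻¹) (hb2 : Commute b2 m) (hk : SemiconjBy a2 b2 (m ^ k * b2))
    (hA : a1 ^ 2 = a2 ^ (2 * a) * b2 * m ^ e) :
    a2 * a1 ^ 2 = a1 ^ 2 * a2 * m ^ (2 * e - k) := by
  refine h2.mul_eq_mul_mul_zpow ?_
  have hX : SemiconjBy a2 (a2 ^ (2 * a)) (a2 ^ (2 * a)) := (Commute.refl a2).zpow_right _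
  have key := (hX.mul_right hk).mul_right (h2.zpow_neg_of_inv e)
  rw [hA]
  refine (congrArg (SemiconjBy a2 _) ?_).mpr key
  rw [← (hb2.zpow_right k).eq]
  simp only [mul_assoc, ← zpow_add]
  congr 3
  ring

/-- The relation `α₁α₂² = α₂²α₁m^{j+2(f−de)}`. -/
theorem a1_mul_a2_sq_of_gluing {G : Type*} [Group G] {a1 b1 a2 b2 m : G} {j k a d e f : ℤ}
    (h1 : SemiconjBy a1 m m⁻¹) (h2 : SemiconjBy a2 m m⁻¹) (hb1 : Commute b1 m)
    (hb2 : Commute b2 m) (hj : SemiconjBy a1 b1 (m ^ j * b1))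
    (hk : SemiconjBy a2 b2 (m ^ k * b2))
    (hA : a1 ^ 2 = a2 ^ (2 * a) * b2 * m ^ e)
    (hB : b1 = a2 ^ (2 * (a * d - 1)) * b2 ^ d * m ^ f) :
    a1 * a2 ^ 2 = a2 ^ 2 * a1 * m ^ (j + 2 * (f - d * e)) := by
  refine h1.mul_eq_mul_mul_zpow ?_
  have hXm : Commute (a2 ^ 2) m := h2.sq_commute_of_inv
  have hXb : Commute (a2 ^ 2) b2 := h2.sq_commute_of_zpow_mul hk
  have hAd : (a1 ^ 2) ^ d = a2 ^ 2 * b1 * m ^ (d * e - f) := by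
    have hpow (n : ℤ) : a2 ^ (2 * n) = (a2 ^ 2) ^ n := by rw [zpow_mul, zpow_ofNat]
    rw [hA, hB, hpow, hpow,
      (((hXm.zpow_left a).mul_left hb2).zpow_right e).mul_zpow, (hXb.zpow_left a).mul_zpow,
      ← zpow_mul, ← zpow_mul, zpow_sub_one, ← ((Commute.refl _).zpow_right (a * d)).inv_left.eq]
    simp only [mul_assoc, mul_inv_cancel_left, ← zpow_add]
    congr 3
    ring
  have hX : a2 ^ 2 = (a1 ^ 2) ^ d * m ^ (f - d * e) * b1⁻¹ := by
    rw [hAd, mul_assoc _ (m ^ (d * e - f)), ← zpow_add]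
    simp
  have hA1 : SemiconjBy a1 ((a1 ^ 2) ^ d) ((a1 ^ 2) ^ d) :=
    ((Commute.refl a1).pow_right 2).zpow_right d
  have key := (hA1.mul_right (h1.zpow_neg_of_inv (f - d * e))).mul_right hj.inv_right
  rw [← hX] at key
  refine (congrArg (SemiconjBy a1 _) ?_).mpr key
  rw [hX, mul_inv_rev, mul_assoc _ b1⁻¹, (hb1.inv_left.zpow_right _).eq, ← zpow_neg,
    (hb1.inv_left.zpow_right (-j)).eq]
  simp only [← mul_assoc]
  simp only [mul_assoc ((a1 ^ 2) ^ d), ← zpow_add]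
  congr 3
  ring

/-- The commutation relations `α₁α₂² = α₂²α₁m^{j+2(f−de)}` and
`α₂α₁² = α₁²α₂m^{2e−k}`, derived in the paper from the presentation (c-odd). -/
theorem cOdd_commutation_relations (j k a d e f : ℤ)
    (hj : j = 0 ∨ j = 1) (hk : k = 0 ∨ k = 1) :
    let G := PresentedGroup (cOddRels j k a d e f)
    let a1 : G := PresentedGroup.of GlueGen.a1
    let a2 : G := PresentedGroup.of GlueGen.a2
    let m : G := PresentedGroup.of GlueGen.m
    a1 * a2 ^ 2 = a2 ^ 2 * a1 * m ^ (j + 2 * (f - d * e)) ∧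
    a2 * a1 ^ 2 = a1 ^ 2 * a2 * m ^ (2 * e - k) := by
  intro G a1 a2 m
  let b1 : G := PresentedGroup.of GlueGen.b1
  let b2 : G := PresentedGroup.of GlueGen.b2
  have rel {r : FreeGroup GlueGen} (hr : r ∈ cOddRels j k a d e f) :
      PresentedGroup.mk (cOddRels j k a d e f) r = 1 := PresentedGroup.one_of_mem hr
  have h1 : a1⁻¹ * m * a1 * m = 1 := rel (by simp [cOddRels])
  have h2 : a2⁻¹ * m * a2 * m = 1 := rel (by simp [cOddRels])
  have h3 : b1 * m * b1⁻¹ * m⁻¹ = 1 := rel (by simp [cOddRels])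
  have h4 : b2 * m * b2⁻¹ * m⁻¹ = 1 := rel (by simp [cOddRels])
  have h5 : a1 * b1 * a1⁻¹ * b1⁻¹ * m ^ (-j) = 1 := rel (by simp [cOddRels])
  have h6 : a2 * b2 * a2⁻¹ * b2⁻¹ * m ^ (-k) = 1 := rel (by simp [cOddRels])
  have h7 : a1 ^ 2 * (a2 ^ (2 * a) * b2 * m ^ e)⁻¹ = 1 := rel (by simp [cOddRels])
  have h8 : b1 * (a2 ^ (2 * (a * d - 1)) * b2 ^ d * m ^ f)⁻¹ = 1 := rel (by simp [cOddRels])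
  have inverts {x : G} (h : x⁻¹ * m * x * m = 1) : SemiconjBy x m m⁻¹ := by
    have h' : SemiconjBy x m⁻¹ m := by
      rw [SemiconjBy, ← eq_inv_of_mul_eq_one_left h]
      group
    have h'' := h'.inv_right
    rwa [inv_inv] at h''
  have commutes {x : G} (h : x * m * x⁻¹ * m⁻¹ = 1) : Commute x m :=
    mul_inv_eq_iff_eq_mul.mp (mul_inv_eq_one.mp h)
  have twists {x y : G} {n : ℤ} (h : x * y * x⁻¹ * y⁻¹ * m ^ (-n) = 1) :
      SemiconjBy x y (m ^ n * y) := by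
    rw [zpow_neg, mul_inv_eq_one, mul_inv_eq_iff_eq_mul, mul_inv_eq_iff_eq_mul] at h
    exact h
  exact ⟨a1_mul_a2_sq_of_gluing (inverts h1) (inverts h2) (commutes h3) (commutes h4)
      (twists h5) (twists h6) (mul_inv_eq_one.mp h7) (mul_inv_eq_one.mp h8),
    a2_mul_a1_sq_of_gluing (inverts h2) (commutes h4) (twists h6) (mul_inv_eq_one.mp h7)⟩
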